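/- arXiv:0804.1763 — 3 statements merged into one kernel-verified Lean document; each statement's English description precedes it below -/
import Mathlib

section
/- The subgroup V of GL(4,ℚ) generated by the six matrices s₁, …, s₆ is finite of cardinality 1152 = 2⁷·3². (V is the automorphism group of the root system of type D₄.) -/
/-- The simple reflection `s₁` of the Weyl group of `D₄`. -/
def s1 : Matrix (Fin 4) (Fin 4) ℚ := !![-1,0,0,0; 1,1,0,0; 0,0,1,0; 0,0,0,1]

/-- The simple reflection `s₂` of the Weyl group of `D₄`. -/
def s2 : Matrix (Fin 4) (Fin 4) ℚ := !![1,1,0,0; 0,-1,0,0; 0,1,1,0; 0,1,0,1]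

/-- The simple reflection `s₃` of the Weyl group of `D₄`. -/
def s3 : Matrix (Fin 4) (Fin 4) ℚ := !![1,0,0,0; 0,1,1,0; 0,0,-1,0; 0,0,0,1]

/-- The simple reflection `s₄` of the Weyl group of `D₄`. -/
def s4 : Matrix (Fin 4) (Fin 4) ℚ := !![1,0,0,0; 0,1,0,1; 0,0,1,0; 0,0,0,-1]

/-- The order-3 automorphism `s₅` of the Dynkin diagram of `D₄`. -/
def s5 : Matrix (Fin 4) (Fin 4) ℚ := !![0,0,1,0; 0,1,0,0; 0,0,0,1; 1,0,0,0]

/-- The order-2 automorphism `s₆` of the Dynkin diagram of `D₄`. -/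
def s6 : Matrix (Fin 4) (Fin 4) ℚ := !![1,0,0,0; 0,1,0,0; 0,0,0,1; 0,0,1,0]

open MulAction Matrix

/-- If every point of `O` is reached from `x` by an element of `H`, and `H` moves `x` inside `O`,
then `O` is the `H`-orbit of `x`, and the orbit-stabilizer theorem holds for `O`. -/
theorem Subgroup.card_eq_card_mul_card_inf_stabilizer {G X : Type*} [Group G] [MulAction G X]
    (H : Subgroup G) (x : X) (O : Finset X) (hO : ∀ g ∈ H, g • x ∈ O)
    (hH : ∀ y ∈ O, ∃ g ∈ H, g • x = y) :
    Nat.card H = O.card * Nat.card (H ⊓ stabilizer G x : Subgroup G) := by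
  have horbit : orbit H x = O := by
    ext y
    constructor
    · rintro ⟨g, rfl⟩
      exact hO g g.2
    · intro hy
      obtain ⟨g, hg, rfl⟩ := hH y hy
      exact ⟨⟨g, hg⟩, rfl⟩
  have hstab : (stabilizer G x).subgroupOf H = stabilizer H x := by
    ext g
    rfl
  rw [← (stabilizer H x).card_mul_index, index_stabilizer, horbit, Set.ncard_coe_finset, mul_comm,
    ← hstab, ← Subgroup.inf_subgroupOf_left,
    Nat.card_congr (Subgroup.subgroupOfEquivOfLe inf_le_left).toEquiv]

namespace AutD4

/-- The six generators, as integral matrices. -/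
def gen : Fin 6 → GL (Fin 4) ℤ :=
  ![⟨!![-1,0,0,0; 1,1,0,0; 0,0,1,0; 0,0,0,1], !![-1,0,0,0; 1,1,0,0; 0,0,1,0; 0,0,0,1],
      by decide, by decide⟩,
    ⟨!![1,1,0,0; 0,-1,0,0; 0,1,1,0; 0,1,0,1], !![1,1,0,0; 0,-1,0,0; 0,1,1,0; 0,1,0,1],
      by decide, by decide⟩,
    ⟨!![1,0,0,0; 0,1,1,0; 0,0,-1,0; 0,0,0,1], !![1,0,0,0; 0,1,1,0; 0,0,-1,0; 0,0,0,1],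
      by decide, by decide⟩,
    ⟨!![1,0,0,0; 0,1,0,1; 0,0,1,0; 0,0,0,-1], !![1,0,0,0; 0,1,0,1; 0,0,1,0; 0,0,0,-1],
      by decide, by decide⟩,
    ⟨!![0,0,1,0; 0,1,0,0; 0,0,0,1; 1,0,0,0], !![0,0,0,1; 0,1,0,0; 1,0,0,0; 0,0,1,0],
      by decide, by decide⟩,
    ⟨!![1,0,0,0; 0,1,0,0; 0,0,0,1; 0,0,1,0], !![1,0,0,0; 0,1,0,0; 0,0,0,1; 0,0,1,0],
      by decide, by decide⟩]

/-- The integral form of the automorphism group of the root system `D₄`. -/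
def autGroup : Subgroup (GL (Fin 4) ℤ) := Subgroup.closure (Set.range gen)

/-- The roots of `D₄`, in the basis of fundamental weights. -/
def roots : Finset (Fin 4 → ℤ) :=
  {![2,-1,0,0], ![-1,2,-1,-1], ![0,-1,2,0], ![0,-1,0,2],
    ![1,1,-1,-1], ![-1,1,1,-1], ![-1,1,-1,1], ![1,0,1,-1], ![1,0,-1,1], ![-1,0,1,1],
    ![1,-1,1,1], ![0,1,0,0],
    ![-2,1,0,0], ![1,-2,1,1], ![0,1,-2,0], ![0,1,0,-2],
    ![-1,-1,1,1], ![1,-1,-1,1], ![1,-1,1,-1], ![-1,0,-1,1], ![-1,0,1,-1], ![1,0,-1,-1],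
    ![-1,1,-1,-1], ![0,-1,0,0]}

/-- Twice the inverse of the Cartan matrix of `D₄`. -/
def gram : Matrix (Fin 4) (Fin 4) ℤ := !![2,2,1,1; 2,4,2,2; 1,2,2,1; 1,2,1,2]

/-- The invariant bilinear form, in the basis of fundamental weights. -/
def form (x y : Fin 4 → ℤ) : ℤ := x ⬝ᵥ gram *ᵥ y

/-- Four mutually orthogonal roots: the highest root and three simple roots. -/
def frame : Fin 4 → Fin 4 → ℤ := ![![0,1,0,0], ![2,-1,0,0], ![0,-1,2,0], ![0,-1,0,2]]

/-- The roots orthogonal to the first `k` vectors of `frame`. -/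
def orthRoots (k : Fin 4) : Finset (Fin 4 → ℤ) := {v ∈ roots | ∀ j < k, form (frame j) v = 0}

/-- The elements of `autGroup` that fix the first `k` vectors of `frame`. -/
def frameStabilizer (k : ℕ) : Subgroup (GL (Fin 4) ℤ) :=
  autGroup ⊓ ⨅ j : Fin 4, ⨅ _ : j.val < k, stabilizer (GL (Fin 4) ℤ) (frame j)

theorem mem_frameStabilizer {k : ℕ} {g : GL (Fin 4) ℤ} :
    g ∈ frameStabilizer k ↔ g ∈ autGroup ∧ ∀ j : Fin 4, j.val < k → g • frame j = frame j := by
  simp only [frameStabilizer, Subgroup.mem_inf, Subgroup.mem_iInf, mem_stabilizer_iff]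

theorem smul_mem_roots {g : GL (Fin 4) ℤ} (hg : g ∈ autGroup) :
    ∀ v ∈ roots, g • v ∈ roots := by
  open scoped Pointwise in
  have hle : autGroup ≤ stabilizer (GL (Fin 4) ℤ) roots := by
    rw [autGroup, Subgroup.closure_le]
    rintro _ ⟨i, rfl⟩
    revert i
    change ∀ i, gen i • roots = roots
    decide +kernel
  intro v hv
  have := Finset.smul_mem_smul_finset (a := g) hv
  rwa [mem_stabilizer_iff.mp (hle hg)] at this

theorem form_smul_smul {g : GL (Fin 4) ℤ} (hg : g ∈ autGroup) :
    ∀ x y, form (g • x) (g • y) = form x y := by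
  induction hg using Subgroup.closure_induction with
  | mem g hg =>
    obtain ⟨i, rfl⟩ := hg
    have hi : ∀ i, (gen i).1ᵀ * gram * (gen i).1 = gram := by decide +kernel
    intro x y
    conv_rhs => rw [form, ← hi i]
    simp only [form, Units.smul_def, smul_eq_mulVec, ← mulVec_mulVec, dotProduct_mulVec,
      vecMul_transpose]
  | one => simp
  | mul g h _ _ ihg ihh =>
    intro x y
    rw [mul_smul, mul_smul, ihg, ihh]
  | inv g _ ih =>
    intro x y
    rw [← ih, smul_inv_smul, smul_inv_smul]

/-- Words in the generators carrying `frame k` to any root in `orthRoots k`. -/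
def words : List (List (Fin 6)) :=
  [[], [1], [0, 1], [2, 1], [3, 1], [2, 0, 1], [3, 0, 1], [3, 2, 1], [1, 2, 0, 1],
    [3, 2, 0, 1], [1, 3, 0, 1], [1, 3, 2, 1], [3, 1, 2, 0, 1], [1, 3, 2, 0, 1],
    [2, 1, 3, 0, 1], [0, 1, 3, 2, 1], [1, 3, 1, 2, 0, 1], [0, 1, 3, 2, 0, 1],
    [2, 1, 3, 2, 0, 1], [0, 1, 3, 1, 2, 0, 1], [2, 1, 3, 1, 2, 0, 1],
    [2, 0, 1, 3, 2, 0, 1], [2, 0, 1, 3, 1, 2, 0, 1], [1, 2, 0, 1, 3, 1, 2, 0, 1],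
    [0], [4], [4, 0], [4, 4], [4, 4, 0], [3], [5], [2], [5, 2]]

theorem exists_word (k : Fin 4) : ∀ v ∈ orthRoots k, ∃ w ∈ words,
    (∀ j < k, w.foldr (fun i x ↦ gen i • x) (frame j) = frame j) ∧
      w.foldr (fun i x ↦ gen i • x) (frame k) = v := by
  revert k
  decide +kernel

theorem foldr_gen_smul (w : List (Fin 6)) (x : Fin 4 → ℤ) :
    w.foldr (fun i x ↦ gen i • x) x = (w.map gen).prod • x := by
  induction w with
  | nil => simp
  | cons i w ih => simp only [List.foldr_cons, ih, List.map_cons, List.prod_cons, mul_smul]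

theorem card_frameStabilizer (k : Fin 4) : Nat.card (frameStabilizer k) =
    (orthRoots k).card * Nat.card (frameStabilizer (k + 1)) := by
  have hsucc : frameStabilizer (k + 1) =
      frameStabilizer k ⊓ stabilizer (GL (Fin 4) ℤ) (frame k) := by
    ext g
    simp only [Subgroup.mem_inf, mem_frameStabilizer, mem_stabilizer_iff, and_assoc]
    refine and_congr_right fun _ ↦ ⟨fun h ↦ ⟨fun j hj ↦ h j (by lia), h k (by lia)⟩, ?_⟩
    rintro ⟨h, hk⟩ j hj
    obtain hj | hj := Nat.lt_succ_iff_lt_or_eq.mp hj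
    · exact h j hj
    · rwa [Fin.ext hj]
  rw [hsucc]
  apply Subgroup.card_eq_card_mul_card_inf_stabilizer
  · intro g hg
    obtain ⟨hg, hfix⟩ := mem_frameStabilizer.mp hg
    have hroot : ∀ k, frame k ∈ roots := by decide
    have horth : ∀ k, ∀ j < k, form (frame j) (frame k) = 0 := by decide
    refine Finset.mem_filter.mpr ⟨smul_mem_roots hg _ (hroot k), fun j hj ↦ ?_⟩
    rw [← hfix j hj, form_smul_smul hg, horth k j hj]
  · intro v hv
    obtain ⟨w, -, hfix, hw⟩ := exists_word k v hv
    simp only [foldr_gen_smul] at hfix hw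
    refine ⟨(w.map gen).prod, mem_frameStabilizer.mpr ⟨?_, hfix⟩, hw⟩
    refine Subgroup.list_prod_mem _ fun g hg ↦ ?_
    obtain ⟨i, -, rfl⟩ := List.mem_map.mp hg
    exact Subgroup.subset_closure ⟨i, rfl⟩

theorem frameStabilizer_four : frameStabilizer 4 = ⊥ := by
  rw [eq_bot_iff]
  intro g hg
  have hfix := (mem_frameStabilizer.mp hg).2
  have hmul : g.1 * (Matrix.of frame)ᵀ = (Matrix.of frame)ᵀ := by
    ext i j
    exact congrFun (hfix j j.2) i
  have hdet : (Matrix.of frame)ᵀ.det ≠ 0 := by decide +kernel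
  refine Subgroup.mem_bot.mpr (Units.ext ?_)
  have := congrArg (· * adjugate (Matrix.of frame)ᵀ) hmul
  simp only [mul_assoc, mul_adjugate, mul_smul_comm, mul_one] at this
  exact smul_right_injective _ hdet this

theorem card_autGroup : Nat.card autGroup = 1152 := by
  have h₀ : frameStabilizer 0 = autGroup := by simp [frameStabilizer]
  have c₀ := card_frameStabilizer 0
  have c₁ := card_frameStabilizer 1
  have c₂ := card_frameStabilizer 2
  have c₃ := card_frameStabilizer 3
  rw [show (orthRoots 0).card = 24 by decide +kernel] at c₀
  rw [show (orthRoots 1).card = 6 by decide +kernel] at c₁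
  rw [show (orthRoots 2).card = 4 by decide +kernel] at c₂
  rw [show (orthRoots 3).card = 2 by decide +kernel] at c₃
  norm_num [frameStabilizer_four, h₀] at c₀ c₁ c₂ c₃
  rw [c₀, c₁, c₂, c₃]

end AutD4

/-- The automorphism group `V` of the root system of type `D₄`, generated inside
`GL(4,ℚ)` by `s₁, …, s₆`, is finite of cardinality `1152 = 2⁷·3²`. -/
theorem autD4_card (u₁ u₂ u₃ u₄ u₅ u₆ : GL (Fin 4) ℚ)
    (h₁ : (u₁ : Matrix (Fin 4) (Fin 4) ℚ) = s1)
    (h₂ : (u₂ : Matrix (Fin 4) (Fin 4) ℚ) = s2)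
    (h₃ : (u₃ : Matrix (Fin 4) (Fin 4) ℚ) = s3)
    (h₄ : (u₄ : Matrix (Fin 4) (Fin 4) ℚ) = s4)
    (h₅ : (u₅ : Matrix (Fin 4) (Fin 4) ℚ) = s5)
    (h₆ : (u₆ : Matrix (Fin 4) (Fin 4) ℚ) = s6) :
    Nat.card (Subgroup.closure {u₁, u₂, u₃, u₄, u₅, u₆} : Subgroup (GL (Fin 4) ℚ))
      = 1152 ∧ (1152 : ℕ) = 2 ^ 7 * 3 ^ 2 := by
  refine ⟨?_, by norm_num⟩
  let f := GeneralLinearGroup.map (n := Fin 4) (Int.castRingHom ℚ)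
  have hf : Function.Injective f :=
    Units.map_injective (Matrix.map_injective Int.cast_injective)
  have hgen : f ∘ AutD4.gen = ![u₁, u₂, u₃, u₄, u₅, u₆] := by
    funext i
    apply Units.ext
    fin_cases i
    on_goal 1 => refine Eq.trans ?_ h₁.symm
    on_goal 2 => refine Eq.trans ?_ h₂.symm
    on_goal 3 => refine Eq.trans ?_ h₃.symm
    on_goal 4 => refine Eq.trans ?_ h₄.symm
    on_goal 5 => refine Eq.trans ?_ h₅.symm
    on_goal 6 => refine Eq.trans ?_ h₆.symm
    all_goals
      ext i j
      fin_cases i <;> fin_cases j <;> simp [f, AutD4.gen, s1, s2, s3, s4, s5, s6]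
  have hmap : Subgroup.closure {u₁, u₂, u₃, u₄, u₅, u₆} = AutD4.autGroup.map f := by
    rw [AutD4.autGroup, MonoidHom.map_closure, ← Set.range_comp, hgen]
    congr 1
    simp only [range_cons, range_empty, Set.union_empty, Set.singleton_union]
  rw [hmap, Subgroup.card_map_of_injective hf, AutD4.card_autGroup]
end

section
/- In the group V, the elements of order 2 form exactly 7 conjugacy classes, the elements of order 3 form exactly 3 conjugacy classes, the elements of order 4 form exactly 5 conjugacy classes, the elements of order 6 form exactly 7 conjugacy classes, the elements of order 8 form exactly 1 conjugacy class, and the elements of order 12 form exactly 1 conjugacy class. -/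
open scoped Matrix

namespace AutD4

/-! ### Permutations of the roots as numbers

An element of the group permutes the 24 roots of `D₄`; the resulting permutation is stored as a
natural number in base `32`. The definitions below are phrased so that the kernel evaluates them
quickly. -/

/-- The number with base-`32` digits `f k, f (k + 1), …, f (k + n - 1)`, each reduced mod `32`. -/
noncomputable def encodeFrom (n k : ℕ) (f : ℕ → ℕ) : ℕ :=
  Nat.rec (motive := fun _ => ℕ → ℕ) (fun _ => 0)
    (fun _ ih k => Nat.add (Nat.mod (f k) 32) (Nat.mul 32 (ih k.succ))) n k

/-- The code of the map `f` on `{0, …, 23}`. -/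
noncomputable def encode (f : ℕ → ℕ) : ℕ := encodeFrom 24 0 f

/-- The `i`-th base-`32` digit of `c`. -/
def digit (c i : ℕ) : ℕ := Nat.mod (Nat.div c (Nat.pow 32 i)) 32

/-- The code of a product. -/
noncomputable def mulCode (c d : ℕ) : ℕ := encode fun i => digit d (digit c i)

/-- The code of the conjugate of an element by an involution with code `a`. -/
noncomputable def conjCode (a c : ℕ) : ℕ := encode fun i => digit a (digit c (digit a i))

/-- Membership in a list of numbers. -/
noncomputable def mem (c : ℕ) (l : List ℕ) : Bool :=
  List.rec false (fun d _ ih => Bool.rec ih true (Nat.beq c d)) l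

/-- `force n k = k n`, but the kernel evaluates `n` before passing it to `k`. -/
def force {α : Type} : ℕ → (ℕ → α) → α
  | 0, k => k 0
  | n + 1, k => k n.succ

theorem encodeFrom_succ (n k : ℕ) (f : ℕ → ℕ) :
    encodeFrom (n + 1) k f = f k % 32 + 32 * encodeFrom n (k + 1) f := rfl

theorem digit_encodeFrom (f : ℕ → ℕ) {n i : ℕ} (k : ℕ) (hi : i < n) :
    digit (encodeFrom n k f) i = f (k + i) % 32 := by
  change encodeFrom n k f / 32 ^ i % 32 = f (k + i) % 32
  induction n generalizing k i with
  | zero => omega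
  | succ n ih =>
    rw [encodeFrom_succ]
    cases i with
    | zero => simp
    | succ i =>
      rw [pow_succ', ← Nat.div_div_eq_div_mul,
        show (f k % 32 + 32 * encodeFrom n (k + 1) f) / 32 = encodeFrom n (k + 1) f by omega,
        ih (k + 1) (by omega), add_right_comm, add_assoc]

theorem digit_encode {f : ℕ → ℕ} {i : ℕ} (hi : i < 24) (hf : f i < 24) :
    digit (encode f) i = f i := by
  rw [encode, digit_encodeFrom f 0 hi, zero_add, Nat.mod_eq_of_lt (by omega)]

theorem encodeFrom_congr {f f' : ℕ → ℕ} (n k : ℕ) (h : ∀ i < n, f (k + i) = f' (k + i)) :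
    encodeFrom n k f = encodeFrom n k f' := by
  induction n generalizing k with
  | zero => rfl
  | succ n ih =>
    have h0 := h 0 (by omega)
    rw [add_zero] at h0
    rw [encodeFrom_succ, encodeFrom_succ, h0, ih]
    intro i hi
    have := h (i + 1) (by omega)
    rwa [← add_assoc, add_right_comm] at this

theorem encode_congr {f f' : ℕ → ℕ} (h : ∀ i < 24, f i = f' i) : encode f = encode f' :=
  encodeFrom_congr 24 0 (by simpa using h)

attribute [irreducible] encode

theorem mem_iff {c : ℕ} {l : List ℕ} : mem c l = true ↔ c ∈ l := by
  induction l with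
  | nil => simp [mem]
  | cons d l ih =>
    change (Bool.rec (mem c l) true (Nat.beq c d) : Bool) = true ↔ _
    rw [List.mem_cons, ← ih, ← Nat.beq_eq]
    cases Nat.beq c d <;> simp

@[simp] theorem force_eq {α : Type} (n : ℕ) (k : ℕ → α) : force n k = k n := by
  cases n <;> rfl

/-! ### The generators -/

/-- Coordinates of the roots of `D₄` in the basis of simple roots. -/
def root (i : ℕ) : Fin 4 → ℚ :=
  [ ![1, 0, 0, 0], ![0, 1, 0, 0], ![0, 0, 1, 0], ![0, 0, 0, 1], ![1, 1, 0, 0], ![0, 1, 1, 0],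
    ![0, 1, 0, 1], ![1, 1, 1, 0], ![1, 1, 0, 1], ![0, 1, 1, 1], ![1, 1, 1, 1], ![1, 2, 1, 1],
    ![-1, 0, 0, 0], ![0, -1, 0, 0], ![0, 0, -1, 0], ![0, 0, 0, -1], ![-1, -1, 0, 0],
    ![0, -1, -1, 0], ![0, -1, 0, -1], ![-1, -1, -1, 0], ![-1, -1, 0, -1], ![0, -1, -1, -1],
    ![-1, -1, -1, -1], ![-1, -2, -1, -1]].getD i 0

/-- The matrices `s₂, s₁, s₅s₆, s₆`: simple reflections of type `F₄`. -/
def genMatrix : Fin 4 → Matrix (Fin 4) (Fin 4) ℚ := ![s2, s1, s5 * s6, s6]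

/-- The permutations of the roots induced by the generators. -/
def genPerm : Fin 4 → List ℕ := ![
  [4, 13, 5, 6, 0, 2, 3, 7, 8, 9, 11, 10, 16, 1, 17, 18, 12, 14, 15, 19, 20, 21, 23, 22],
  [12, 4, 2, 3, 1, 7, 8, 5, 6, 10, 9, 11, 0, 16, 14, 15, 13, 19, 20, 17, 18, 22, 21, 23],
  [3, 1, 2, 0, 6, 5, 4, 9, 8, 7, 10, 11, 15, 13, 14, 12, 18, 17, 16, 21, 20, 19, 22, 23],
  [0, 1, 3, 2, 4, 6, 5, 8, 7, 9, 10, 11, 12, 13, 15, 14, 16, 18, 17, 20, 19, 21, 22, 23]]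

/-- The codes of the generators. -/
noncomputable def genCode (a : Fin 4) : ℕ := encode fun i => (genPerm a).getD i 0

/-- The code of a word in the generators. -/
noncomputable def wordCode (w : List (Fin 4)) : ℕ :=
  w.foldr (fun a c => mulCode (genCode a) c) (encode id)

/-- The matrix `g`, acting on row vectors, permutes the roots as prescribed by the code `c`. -/
def Realizes (g : GL (Fin 4) ℚ) (c : ℕ) : Prop :=
  ∃ p : ℕ → ℕ, c = encode p ∧
    ∀ i < 24, p i < 24 ∧ root i ᵥ* (g : Matrix (Fin 4) (Fin 4) ℚ) = root (p i)

theorem root_injective : ∀ i < 24, ∀ j < 24, root i = root j → i = j := by decide +kernel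

theorem root_basis (i : Fin 4) : root i = Pi.single i 1 := by
  revert i; decide +kernel

theorem genPerm_spec (a : Fin 4) : ∀ i < 24, (genPerm a).getD i 0 < 24 ∧
    root i ᵥ* genMatrix a = root ((genPerm a).getD i 0) := by
  revert a; decide +kernel

namespace Realizes

variable {g h : GL (Fin 4) ℚ} {c d : ℕ}

theorem one : Realizes 1 (encode id) := ⟨id, rfl, fun i hi => ⟨hi, by simp⟩⟩

theorem mul (hg : Realizes g c) (hh : Realizes h d) : Realizes (g * h) (mulCode c d) := by
  obtain ⟨p, rfl, hp⟩ := hg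
  obtain ⟨q, rfl, hq⟩ := hh
  refine ⟨fun i => q (p i), encode_congr fun i hi => ?_, fun i hi => ?_⟩
  · rw [digit_encode hi (hp i hi).1, digit_encode (hp i hi).1 (hq _ (hp i hi).1).1]
  · refine ⟨(hq _ (hp i hi).1).1, ?_⟩
    rw [Units.val_mul, ← Matrix.vecMul_vecMul, (hp i hi).2, (hq _ (hp i hi).1).2]

theorem conj (hg : Realizes g c) (hh : Realizes h d) :
    Realizes (g * h * g) (conjCode c d) := by
  convert (hg.mul hh).mul hg using 1
  obtain ⟨p, rfl, hp⟩ := hg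
  obtain ⟨q, rfl, hq⟩ := hh
  refine encode_congr fun i hi => ?_
  have hpi := (hp i hi).1
  have hqi : digit (encode q) (digit (encode p) i) < 24 := by
    rw [digit_encode hi hpi, digit_encode hpi (hq _ hpi).1]
    exact (hq _ hpi).1
  refine congrArg (digit (encode p)) ?_
  exact (digit_encode (f := fun i => digit (encode q) (digit (encode p) i)) hi hqi).symm

theorem code_unique (hc : Realizes g c) (hd : Realizes g d) : c = d := by
  obtain ⟨p, rfl, hp⟩ := hc
  obtain ⟨q, rfl, hq⟩ := hd
  exact encode_congr fun i hi => root_injective _ (hp i hi).1 _ (hq i hi).1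
    ((hp i hi).2.symm.trans (hq i hi).2)

theorem unique (hg : Realizes g c) (hh : Realizes h c) : g = h := by
  obtain ⟨p, rfl, hp⟩ := hg
  obtain ⟨q, hpq, hq⟩ := hh
  refine Units.ext (Matrix.ext fun i j => ?_)
  have hi : (i : ℕ) < 24 := by omega
  have hpqi : p i = q i := by
    rw [← digit_encode hi (hp i hi).1, hpq, digit_encode hi (hq i hi).1]
  have := (hp i hi).2.trans ((congrArg root hpqi).trans (hq i hi).2.symm)
  rw [root_basis, Matrix.single_one_vecMul, Matrix.single_one_vecMul] at this
  exact congrFun this j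

theorem pow (hg : Realizes g c) (n : ℕ) : Realizes (g ^ n) ((mulCode c)^[n] (encode id)) := by
  induction n with
  | zero => exact one
  | succ n ih =>
    rw [pow_succ', Function.iterate_succ_apply']
    exact hg.mul ih

theorem eq_one_iff (hg : Realizes g c) : g = 1 ↔ c = encode id :=
  ⟨fun h => code_unique (h ▸ hg) one, fun h => unique (h ▸ hg) one⟩

end Realizes

/-! ### Enumeration of the conjugacy classes -/

/-- Add the value of `c` to the queue `q` and to the list `s` of elements found so far, unless it
has been found before, and continue with `k`. -/
noncomputable def visit {α : Type} (c : ℕ) (q s : List ℕ) (k : List ℕ → List ℕ → α) : α :=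
  force c fun c => bif mem c s then k q s else k (c :: q) (c :: s)

/-- Search for conjugates, processing at most `n` elements of a queue. -/
noncomputable def search : ℕ → List ℕ → List ℕ → List ℕ
  | n + 1, c :: q, s =>
    visit (conjCode (genCode 0) c) q s fun q s =>
    visit (conjCode (genCode 1) c) q s fun q s =>
    visit (conjCode (genCode 2) c) q s fun q s =>
    visit (conjCode (genCode 3) c) q s fun q s => search n q s
  | _, _, s => s

/-- The codes of the conjugates of a word; no conjugacy class has more than 144 elements. -/
noncomputable def conjClass (w : List (Fin 4)) : List ℕ :=
  visit (wordCode w) [] [] (search 144)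

/-- Representatives of the conjugacy classes. -/
def repWord : Fin 25 → List (Fin 4) := ![
    [], [0], [2], [0, 1], [0, 2], [1, 2], [2, 3], [0, 1, 2], [0, 1, 3], [0, 2, 3], [1, 2, 3],
    [0, 1, 2, 3], [1, 2, 1, 2], [0, 1, 2, 1, 2], [1, 2, 1, 2, 3], [0, 1, 2, 1, 2, 3],
    [0, 1, 0, 2, 1, 2, 3, 2], [0, 1, 0, 2, 1, 0, 2, 1, 2], [1, 2, 1, 2, 3, 2, 1, 2, 3],
    [0, 1, 0, 2, 1, 0, 2, 1, 2, 3], [0, 1, 2, 1, 2, 3, 2, 1, 2, 3],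
    [0, 1, 0, 2, 1, 0, 2, 3, 2, 1, 2, 3], [0, 1, 0, 2, 1, 0, 2, 1, 2, 3, 2, 1, 2, 3],
    [0, 1, 0, 2, 1, 0, 2, 3, 2, 1, 0, 2, 1, 2, 3, 2],
    [0, 1, 0, 2, 1, 0, 2, 1, 2, 3, 2, 1, 0, 2, 1, 2, 3, 2, 1, 0, 2, 1, 2, 3]]

/-- The orders of the representatives. -/
def repOrder : Fin 25 → ℕ :=
  ![1, 2, 2, 3, 2, 4, 3, 6, 6, 6, 6, 12, 2, 4, 4, 8, 6, 2, 2, 6, 6, 4, 4, 3, 2]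

/-- The codes of the elements of the `i`-th conjugacy class. -/
noncomputable def repClass (i : Fin 25) : List ℕ := conjClass (repWord i)

theorem genCode_mul_self (a : Fin 4) : mulCode (genCode a) (genCode a) = encode id := by
  revert a; decide +kernel

theorem repOrder_spec (i : Fin 25) : 0 < repOrder i ∧
    (mulCode (wordCode (repWord i)))^[repOrder i] (encode id) = encode id ∧
    ∀ m < repOrder i, 0 < m → (mulCode (wordCode (repWord i)))^[m] (encode id) ≠ encode id := by
  revert i; decide +kernel

/-- The lists `repClass i` are stable under conjugation, each contains exactly one of the chosen
representatives, and their union is stable under multiplication by conjugates of generators. -/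
theorem repClass_spec :
    (∀ i, ∀ c ∈ repClass i, ∀ a, mem (conjCode (genCode a) c) (repClass i) = true) ∧
    (∀ i j, mem (wordCode (repWord j)) (repClass i) = decide (i = j)) ∧
    (∀ a, mem (genCode a) (repClass 1 ++ repClass 2) = true) ∧
    ∀ c ∈ repClass 1 ++ repClass 2, ∀ i,
      (force (mulCode c (wordCode (repWord i))) fun d =>
        (List.finRange 25).any fun j => mem d (repClass j)) = true := by
  decide +kernel

theorem visit_forall {P : ℕ → Prop} {c : ℕ} {q s : List ℕ} {k : List ℕ → List ℕ → List ℕ}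
    (hc : P c) (hq : ∀ d ∈ q, P d) (hs : ∀ d ∈ s, P d)
    (hk : ∀ q s, (∀ d ∈ q, P d) → (∀ d ∈ s, P d) → ∀ d ∈ k q s, P d) :
    ∀ d ∈ visit c q s k, P d := by
  rw [visit, force_eq]
  cases mem c s
  · exact hk _ _ (List.forall_mem_cons.2 ⟨hc, hq⟩) (List.forall_mem_cons.2 ⟨hc, hs⟩)
  · exact hk _ _ hq hs

theorem search_forall {P : ℕ → Prop} (hP : ∀ a c, P c → P (conjCode (genCode a) c)) (n : ℕ)
    {q s : List ℕ} (hq : ∀ d ∈ q, P d) (hs : ∀ d ∈ s, P d) : ∀ d ∈ search n q s, P d := by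
  induction n generalizing q s with
  | zero => simpa [search] using hs
  | succ n ih =>
    cases q with
    | nil => simpa [search] using hs
    | cons c q =>
      obtain ⟨hc, hq⟩ := List.forall_mem_cons.1 hq
      exact visit_forall (hP 0 c hc) hq hs fun q s hq hs =>
        visit_forall (hP 1 c hc) hq hs fun q s hq hs =>
        visit_forall (hP 2 c hc) hq hs fun q s hq hs =>
        visit_forall (hP 3 c hc) hq hs fun q s hq hs => ih hq hs

theorem conjClass_forall {P : ℕ → Prop} (hP : ∀ a c, P c → P (conjCode (genCode a) c))
    {w : List (Fin 4)} (hw : P (wordCode w)) : ∀ d ∈ conjClass w, P d :=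
  visit_forall hw (by simp) (by simp) fun _ _ => search_forall hP 144

/-! ### The group generated by elements realizing the generators -/

section Group

variable {x : Fin 4 → GL (Fin 4) ℚ}

theorem gen_inv (hx : ∀ a, Realizes (x a) (genCode a)) (a : Fin 4) : (x a)⁻¹ = x a :=
  inv_eq_of_mul_eq_one_left (((hx a).mul (hx a)).eq_one_iff.2 (genCode_mul_self a))

theorem prod_word_mem (x : Fin 4 → GL (Fin 4) ℚ) (w : List (Fin 4)) :
    (w.map x).prod ∈ Subgroup.closure (Set.range x) := by
  refine Subgroup.list_prod_mem _ fun g hg => ?_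
  obtain ⟨a, -, rfl⟩ := List.mem_map.1 hg
  exact Subgroup.subset_closure ⟨a, rfl⟩

theorem exists_word_s13 (hx : ∀ a, Realizes (x a) (genCode a)) {h : GL (Fin 4) ℚ}
    (hh : h ∈ Subgroup.closure (Set.range x)) : ∃ w : List (Fin 4), h = (w.map x).prod := by
  induction hh using Subgroup.closure_induction with
  | mem g hg =>
    obtain ⟨a, rfl⟩ := hg
    exact ⟨[a], by simp⟩
  | one => exact ⟨[], by simp⟩
  | mul g h _ _ hg hh =>
    obtain ⟨v, rfl⟩ := hg
    obtain ⟨w, rfl⟩ := hh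
    exact ⟨v ++ w, by simp⟩
  | inv g _ hg =>
    obtain ⟨w, rfl⟩ := hg
    refine ⟨w.reverse, ?_⟩
    rw [List.prod_inv_reverse, List.map_map, List.map_reverse]
    congr 2
    exact List.map_congr_left fun a _ => gen_inv hx a

theorem realizes_word (hx : ∀ a, Realizes (x a) (genCode a)) (w : List (Fin 4)) :
    Realizes (w.map x).prod (wordCode w) := by
  induction w with
  | nil => exact Realizes.one
  | cons a w ih => simpa [wordCode] using (hx a).mul ih

theorem orderOf_repWord (hx : ∀ a, Realizes (x a) (genCode a)) (i : Fin 25) :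
    orderOf ((repWord i).map x).prod = repOrder i := by
  have hg := realizes_word hx (repWord i)
  obtain ⟨hpos, hone, hne⟩ := repOrder_spec i
  refine (orderOf_eq_iff hpos).2 ⟨(hg.pow _).eq_one_iff.2 hone, fun m hm hm' h => ?_⟩
  exact hne m hm hm' ((hg.pow m).eq_one_iff.1 h)

theorem exists_realizes_conj (hx : ∀ a, Realizes (x a) (genCode a)) {i : Fin 25}
    {g h : GL (Fin 4) ℚ} {c : ℕ} (hg : Realizes g c) (hc : c ∈ repClass i)
    (hh : h ∈ Subgroup.closure (Set.range x)) :
    ∃ d ∈ repClass i, Realizes (h * g * h⁻¹) d := by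
  obtain ⟨w, rfl⟩ := exists_word_s13 hx hh
  induction w with
  | nil => exact ⟨c, hc, by simpa using hg⟩
  | cons a w ih =>
    obtain ⟨d, hd, hr⟩ := ih (prod_word_mem x w)
    refine ⟨_, mem_iff.1 (repClass_spec.1 i d hd a), ?_⟩
    convert (hx a).conj hr using 1
    rw [List.map_cons, List.prod_cons, mul_inv_rev, gen_inv hx]
    group

theorem exists_conj_of_mem_conjClass (hx : ∀ a, Realizes (x a) (genCode a))
    {w : List (Fin 4)} {c : ℕ} (hc : c ∈ conjClass w) :
    ∃ h ∈ Subgroup.closure (Set.range x), Realizes (h * (w.map x).prod * h⁻¹) c := by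
  refine conjClass_forall (P := fun c => ∃ h ∈ Subgroup.closure (Set.range x),
    Realizes (h * (w.map x).prod * h⁻¹) c) ?_
    ⟨1, one_mem _, by simpa using realizes_word hx w⟩ c hc
  rintro a c ⟨h, hh, hr⟩
  refine ⟨x a * h, mul_mem (Subgroup.subset_closure ⟨a, rfl⟩) hh, ?_⟩
  convert (hx a).conj hr using 1
  rw [mul_inv_rev, gen_inv hx]
  group

theorem exists_conj_repWord (hx : ∀ a, Realizes (x a) (genCode a)) {g : GL (Fin 4) ℚ}
    (hg : g ∈ Subgroup.closure (Set.range x)) :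
    ∃ i, ∃ h ∈ Subgroup.closure (Set.range x), h * ((repWord i).map x).prod * h⁻¹ = g := by
  obtain ⟨w, rfl⟩ := exists_word_s13 hx hg
  induction w with
  | nil => exact ⟨0, 1, one_mem _, by simp [repWord]⟩
  | cons a w ih =>
    obtain ⟨i, h, hh, hi⟩ := ih (prod_word_mem x w)
    obtain ⟨-, -, hgen, hmul⟩ := repClass_spec
    have hd : ∃ d ∈ repClass 1 ++ repClass 2, Realizes (h⁻¹ * x a * h⁻¹⁻¹) d := by
      rcases List.mem_append.1 (mem_iff.1 (hgen a)) with ha | ha <;>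
        obtain ⟨d, hd, hr⟩ := exists_realizes_conj hx (hx a) ha (inv_mem hh)
      · exact ⟨d, List.mem_append_left _ hd, hr⟩
      · exact ⟨d, List.mem_append_right _ hd, hr⟩
    obtain ⟨d, hd, hr⟩ := hd
    have hj := hmul d hd i
    rw [force_eq, List.any_eq_true] at hj
    obtain ⟨j, -, hj⟩ := hj
    obtain ⟨k, hk, hkr⟩ := exists_conj_of_mem_conjClass hx (mem_iff.1 hj)
    refine ⟨j, h * k, mul_mem hh hk, ?_⟩
    have := hkr.unique (hr.mul (realizes_word hx (repWord i)))
    calc h * k * ((repWord j).map x).prod * (h * k)⁻¹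
        = h * (k * ((repWord j).map x).prod * k⁻¹) * h⁻¹ := by group
      _ = x a * (h * ((repWord i).map x).prod * h⁻¹) := by rw [this]; group
      _ = ((a :: w).map x).prod := by rw [hi, List.map_cons, List.prod_cons]

theorem repWord_conj_injective (hx : ∀ a, Realizes (x a) (genCode a)) {i j : Fin 25}
    {h : GL (Fin 4) ℚ} (hh : h ∈ Subgroup.closure (Set.range x))
    (hij : h * ((repWord i).map x).prod * h⁻¹ = ((repWord j).map x).prod) : i = j := by
  have hspec := repClass_spec.2.1
  have hi : wordCode (repWord i) ∈ repClass i := mem_iff.1 (by simp [hspec])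
  obtain ⟨d, hd, hr⟩ := exists_realizes_conj hx (realizes_word hx _) hi hh
  rw [hij] at hr
  rw [hr.code_unique (realizes_word hx _), ← mem_iff, hspec] at hd
  exact of_decide_eq_true hd

end Group

theorem card_conjClasses_orderOf {G ι : Type*} [Group G] (r : ι → G)
    (hsurj : ∀ g, ∃ i, IsConj (r i) g) (hinj : ∀ i j, IsConj (r i) (r j) → i = j) (n : ℕ) :
    Nat.card {c : ConjClasses G // ∃ g, c = ConjClasses.mk g ∧ orderOf g = n} =
      Nat.card {i // orderOf (r i) = n} := by
  refine (Nat.card_congr (Equiv.ofBijective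
    (fun i => ⟨ConjClasses.mk (r i.1), r i.1, rfl, i.2⟩) ⟨?_, ?_⟩)).symm
  · intro i j hij
    exact Subtype.ext (hinj _ _ (ConjClasses.mk_eq_mk_iff_isConj.1 (congrArg Subtype.val hij)))
  · rintro ⟨_, g, rfl, hg⟩
    obtain ⟨i, hi⟩ := hsurj g
    obtain ⟨h, rfl⟩ := isConj_iff.1 hi
    refine ⟨⟨i, ?_⟩, Subtype.ext (ConjClasses.mk_eq_mk_iff_isConj.2 hi)⟩
    rw [← hg]
    exact (MulAut.conj h).orderOf_eq (r i) |>.symm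

theorem card_conjClasses_closure {x : Fin 4 → GL (Fin 4) ℚ}
    (hx : ∀ a, Realizes (x a) (genCode a)) (n : ℕ) :
    Nat.card {c : ConjClasses ↥(Subgroup.closure (Set.range x)) //
      ∃ g, c = ConjClasses.mk g ∧ orderOf g = n} = Nat.card {i // repOrder i = n} := by
  rw [card_conjClasses_orderOf (fun i : Fin 25 => ⟨_, prod_word_mem x (repWord i)⟩)]
  · simp only [Subgroup.orderOf_mk, orderOf_repWord hx]
  · rintro ⟨g, hg⟩
    obtain ⟨i, h, hh, hi⟩ := exists_conj_repWord hx hg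
    exact ⟨i, isConj_iff.2 ⟨⟨h, hh⟩, Subtype.ext hi⟩⟩
  · intro i j hij
    obtain ⟨⟨h, hh⟩, hhij⟩ := isConj_iff.1 hij
    exact repWord_conj_injective hx hh (congrArg Subtype.val hhij)

theorem closure_eq_closure_range {u₁ u₂ u₃ u₄ u₅ u₆ : GL (Fin 4) ℚ}
    (h₁ : (u₁ : Matrix (Fin 4) (Fin 4) ℚ) = s1)
    (h₃ : (u₃ : Matrix (Fin 4) (Fin 4) ℚ) = s3)
    (h₄ : (u₄ : Matrix (Fin 4) (Fin 4) ℚ) = s4)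
    (h₅ : (u₅ : Matrix (Fin 4) (Fin 4) ℚ) = s5)
    (h₆ : (u₆ : Matrix (Fin 4) (Fin 4) ℚ) = s6) :
    Subgroup.closure {u₁, u₂, u₃, u₄, u₅, u₆} =
      Subgroup.closure (Set.range ![u₂, u₁, u₅ * u₆, u₆]) := by
  apply le_antisymm <;> rw [Subgroup.closure_le]
  · have key (a : Fin 4) := Subgroup.subset_closure
      (Set.mem_range_self (f := ![u₂, u₁, u₅ * u₆, u₆]) a)
    have k₁ := key 1
    have k₂ := key 0
    have k₅₆ := key 2
    have k₆ := key 3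
    simp only [Matrix.cons_val, SetLike.mem_coe] at k₁ k₂ k₅₆ k₆
    have k₅ := (Subgroup.mul_mem_cancel_right _ k₆).1 k₅₆
    have e₄ : u₄ = u₅ * u₆ * u₁ * (u₅ * u₆) :=
      Units.ext (by simp only [Units.val_mul, h₁, h₄, h₅, h₆]; decide +kernel)
    have k₄ := mul_mem (mul_mem k₅₆ k₁) k₅₆
    rw [← e₄] at k₄
    have e₃ : u₃ = u₆ * u₄ * u₆ :=
      Units.ext (by simp only [Units.val_mul, h₃, h₄, h₆]; decide +kernel)
    have k₃ := mul_mem (mul_mem k₆ k₄) k₆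
    rw [← e₃] at k₃
    rintro _ (rfl | rfl | rfl | rfl | rfl | rfl) <;> assumption
  · have key {u} (hu : u ∈ ({u₁, u₂, u₃, u₄, u₅, u₆} : Set (GL (Fin 4) ℚ))) :=
      Subgroup.subset_closure hu
    rintro _ ⟨a, rfl⟩
    fin_cases a
    · exact key (by simp)
    · exact key (by simp)
    · exact mul_mem (key (by simp)) (key (by simp))
    · exact key (by simp)

end AutD4

/-- Conjugacy classes of elements of each order in the automorphism group `V` of the
root system `D₄`: the elements of order `2, 3, 4, 6, 8, 12` form exactly
`7, 3, 5, 7, 1, 1` conjugacy classes of `V`, respectively. -/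
theorem autD4_conjugacy_classes (u₁ u₂ u₃ u₄ u₅ u₆ : GL (Fin 4) ℚ)
    (h₁ : (u₁ : Matrix (Fin 4) (Fin 4) ℚ) = s1)
    (h₂ : (u₂ : Matrix (Fin 4) (Fin 4) ℚ) = s2)
    (h₃ : (u₃ : Matrix (Fin 4) (Fin 4) ℚ) = s3)
    (h₄ : (u₄ : Matrix (Fin 4) (Fin 4) ℚ) = s4)
    (h₅ : (u₅ : Matrix (Fin 4) (Fin 4) ℚ) = s5)
    (h₆ : (u₆ : Matrix (Fin 4) (Fin 4) ℚ) = s6) :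
    Nat.card {c : ConjClasses
        ↥(Subgroup.closure {u₁, u₂, u₃, u₄, u₅, u₆} : Subgroup (GL (Fin 4) ℚ)) //
      ∃ g, c = ConjClasses.mk g ∧ orderOf g = 2} = 7 ∧
    Nat.card {c : ConjClasses
        ↥(Subgroup.closure {u₁, u₂, u₃, u₄, u₅, u₆} : Subgroup (GL (Fin 4) ℚ)) //
      ∃ g, c = ConjClasses.mk g ∧ orderOf g = 3} = 3 ∧
    Nat.card {c : ConjClasses
        ↥(Subgroup.closure {u₁, u₂, u₃, u₄, u₅, u₆} : Subgroup (GL (Fin 4) ℚ)) //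
      ∃ g, c = ConjClasses.mk g ∧ orderOf g = 4} = 5 ∧
    Nat.card {c : ConjClasses
        ↥(Subgroup.closure {u₁, u₂, u₃, u₄, u₅, u₆} : Subgroup (GL (Fin 4) ℚ)) //
      ∃ g, c = ConjClasses.mk g ∧ orderOf g = 6} = 7 ∧
    Nat.card {c : ConjClasses
        ↥(Subgroup.closure {u₁, u₂, u₃, u₄, u₅, u₆} : Subgroup (GL (Fin 4) ℚ)) //
      ∃ g, c = ConjClasses.mk g ∧ orderOf g = 8} = 1 ∧
    Nat.card {c : ConjClasses
        ↥(Subgroup.closure {u₁, u₂, u₃, u₄, u₅, u₆} : Subgroup (GL (Fin 4) ℚ)) //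
      ∃ g, c = ConjClasses.mk g ∧ orderOf g = 12} = 1 := by
  have hx (a : Fin 4) :
      AutD4.Realizes (![u₂, u₁, u₅ * u₆, u₆] a) (AutD4.genCode a) := by
    refine ⟨_, rfl, ?_⟩
    convert AutD4.genPerm_spec a using 6
    fin_cases a <;> simp [AutD4.genMatrix, *]
  rw [AutD4.closure_eq_closure_range h₁ h₃ h₄ h₅ h₆]
  simp only [AutD4.card_conjClasses_closure hx, Nat.card_eq_fintype_card]
  decide +kernel
end

section
/- The K-linear endomorphisms F₁ and F₂ of the 10-dimensional space S of homogeneous polynomials of degree 3 in K[X₀,X₁,X₂] commute with each other, where F₁ is induced by the substitution X_i ↦ X_{i+1 (mod 3)} and F₂ by the substitution X_i ↦ ωⁱ·X_i; and for each pair (a,b) ∈ (ℤ/3ℤ)², the joint eigenspace {f ∈ S : F₁(f) = ωᵃ·f and F₂(f) = ω^b·f} has dimension 2 if (a,b) = (0,0) and dimension 1 otherwise. (The ℤ₃×ℤ₃-grading induced on S³(V) by the cyclic shift and the diagonal scaling splits it into one 2-dimensional and eight 1-dimensional components.) -/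
/-- The endomorphism of `K[X₀,X₁,X₂]` induced by the substitution `X_i ↦ X_{i+1 (mod 3)}`. -/
noncomputable def F1 (K : Type*) [Field K] :
    MvPolynomial (Fin 3) K →ₐ[K] MvPolynomial (Fin 3) K :=
  MvPolynomial.rename (fun i : Fin 3 => i + 1)

/-- The endomorphism of `K[X₀,X₁,X₂]` induced by the substitution `X_i ↦ ωⁱ·X_i`. -/
noncomputable def F2 (K : Type*) [Field K] (ω : K) :
    MvPolynomial (Fin 3) K →ₐ[K] MvPolynomial (Fin 3) K :=
  MvPolynomial.aeval (fun i : Fin 3 => (ω ^ (i : ℕ)) • MvPolynomial.X i)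

/-- The exponent vector of `X₀ ^ p * X₁ ^ q * X₂ ^ r`. -/
noncomputable def exponent (p q r : ℕ) : Fin 3 →₀ ℕ :=
  Finsupp.equivFunOnFinite.symm ![p, q, r]

theorem exponent_inj {p q r p' q' r' : ℕ} :
    exponent p q r = exponent p' q' r' ↔ p = p' ∧ q = q' ∧ r = r' := by
  simp [exponent]

theorem exists_eq_exponent (d : Fin 3 →₀ ℕ) : ∃ p q r, d = exponent p q r :=
  ⟨d 0, d 1, d 2, by ext i; fin_cases i <;> rfl⟩

theorem degree_exponent (p q r : ℕ) : (exponent p q r).degree = p + q + r := by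
  simp [Finsupp.degree_eq_sum, exponent, Fin.sum_univ_three]

section

open MvPolynomial

variable {K : Type*} [Field K]

theorem F1_monomial (p q r : ℕ) (c : K) :
    F1 K (monomial (exponent p q r) c) = monomial (exponent r p q) c := by
  rw [F1, rename_monomial]
  refine congrArg (monomial · c) (Finsupp.ext fun i => ?_)
  have hinj : Function.Injective (fun i : Fin 3 => i + 1) := add_left_injective 1
  fin_cases i
  · exact Finsupp.mapDomain_apply hinj _ 2
  · exact Finsupp.mapDomain_apply hinj _ 0
  · exact Finsupp.mapDomain_apply hinj _ 1

theorem F2_monomial (ω : K) (p q r : ℕ) (c : K) :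
    F2 K ω (monomial (exponent p q r) c) = monomial (exponent p q r) (ω ^ (q + 2 * r) * c) := by
  rw [F2, aeval_monomial, monomial_eq (a := ω ^ (q + 2 * r) * c),
    Finsupp.prod_fintype _ _ (by simp), Finsupp.prod_fintype _ _ (by simp)]
  simp only [exponent, Fin.prod_univ_three, Finsupp.equivFunOnFinite_symm_apply_apply,
    Matrix.cons_val, smul_eq_C_mul, algebraMap_eq, map_mul, map_pow, Fin.val_zero, Fin.val_one,
    Fin.val_two, mul_pow]
  ring

theorem coeff_exponent_monomial (p q r p' q' r' : ℕ) (c : K) :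
    coeff (exponent p q r) (monomial (exponent p' q' r') c) =
      if p' = p ∧ q' = q ∧ r' = r then c else 0 := by
  classical
  simp only [coeff_monomial, exponent_inj]

theorem coeff_F1 (f : MvPolynomial (Fin 3) K) (p q r : ℕ) :
    coeff (exponent r p q) (F1 K f) = coeff (exponent p q r) f := by
  induction f using MvPolynomial.induction_on' with
  | monomial d c =>
    obtain ⟨p', q', r', rfl⟩ := exists_eq_exponent d
    rw [F1_monomial, coeff_exponent_monomial, coeff_exponent_monomial]
    exact if_congr (by tauto) rfl rfl
  | add f g hf hg => rw [map_add, coeff_add, coeff_add, hf, hg]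

theorem coeff_F2 (ω : K) (f : MvPolynomial (Fin 3) K) (p q r : ℕ) :
    coeff (exponent p q r) (F2 K ω f) = ω ^ (q + 2 * r) * coeff (exponent p q r) f := by
  induction f using MvPolynomial.induction_on' with
  | monomial d c =>
    obtain ⟨p', q', r', rfl⟩ := exists_eq_exponent d
    rw [F2_monomial, coeff_exponent_monomial, coeff_exponent_monomial]
    split_ifs with h
    · rw [h.2.1, h.2.2]
    · rw [mul_zero]
  | add f g hf hg => rw [map_add, coeff_add, coeff_add, hf, hg, mul_add]

theorem coeff_exponent_eq_zero {f : MvPolynomial (Fin 3) K} {n : ℕ} (hf : f.IsHomogeneous n)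
    {p q r : ℕ} (h : p + q + r ≠ n) : coeff (exponent p q r) f = 0 :=
  hf.coeff_eq_zero (by rwa [degree_exponent])

theorem isHomogeneous_monomial_exponent {p q r n : ℕ} (h : p + q + r = n) (c : K) :
    (monomial (exponent p q r) c).IsHomogeneous n :=
  isHomogeneous_monomial c ((degree_exponent p q r).trans h)

theorem F1_F2_comm {ω : K} (hω3 : ω ^ 3 = 1) {f : MvPolynomial (Fin 3) K}
    (hf : f.IsHomogeneous 3) : F1 K (F2 K ω f) = F2 K ω (F1 K f) := by
  ext d
  obtain ⟨r, p, q, rfl⟩ := exists_eq_exponent d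
  rw [coeff_F1, coeff_F2, coeff_F2, coeff_F1]
  by_cases h : p + q + r = 3
  · congr 1
    calc ω ^ (q + 2 * r) = ω ^ (q + 2 * r) * ω ^ 3 := by rw [hω3, mul_one]
      _ = ω ^ (p + 2 * q) * (ω ^ 3) ^ r := by
        rw [← pow_mul, ← pow_add, ← pow_add]
        congr 1
        lia
      _ = ω ^ (p + 2 * q) := by rw [hω3, one_pow, mul_one]
  · rw [coeff_exponent_eq_zero hf h, mul_zero, mul_zero]

/-- The cubics on which `F1` acts as the scalar `c` and `F2 ω` acts as the scalar `s`. -/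
noncomputable def jointEigenspace (ω c s : K) : Submodule K (MvPolynomial (Fin 3) K) :=
  homogeneousSubmodule (Fin 3) K 3 ⊓ Module.End.eigenspace (F1 K).toLinearMap c ⊓
    Module.End.eigenspace (F2 K ω).toLinearMap s

theorem mem_jointEigenspace {ω c s : K} {f : MvPolynomial (Fin 3) K} :
    f ∈ jointEigenspace ω c s ↔ f.IsHomogeneous 3 ∧ F1 K f = c • f ∧ F2 K ω f = s • f := by
  simp [jointEigenspace, and_assoc]

/-- The exponent of `X₀ ^ 2 * X_b`. -/
noncomputable def leadExponent : Fin 3 → Fin 3 →₀ ℕ :=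
  ![exponent 3 0 0, exponent 2 1 0, exponent 2 0 1]

/-- The `c`-eigenvector of `F1` in the span of the cyclic orbit of `X₀ ^ 2 * X_b`. -/
noncomputable def orbitVector (c : K) : Fin 3 → MvPolynomial (Fin 3) K :=
  ![monomial (exponent 3 0 0) 1 + monomial (exponent 0 3 0) (c ^ 2) + monomial (exponent 0 0 3) c,
    monomial (exponent 2 1 0) 1 + monomial (exponent 0 2 1) (c ^ 2) + monomial (exponent 1 0 2) c,
    monomial (exponent 2 0 1) 1 + monomial (exponent 1 2 0) (c ^ 2) + monomial (exponent 0 1 2) c]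

theorem orbitVector_mem {ω c : K} (hω3 : ω ^ 3 = 1) (hc : c ^ 3 = 1) (b : Fin 3) :
    orbitVector c b ∈ jointEigenspace ω c (ω ^ (b : ℕ)) := by
  have hω4 : ω ^ 4 = ω := by rw [pow_succ, hω3, one_mul]
  have hω5 : ω ^ 5 = ω ^ 2 := by rw [pow_add ω 3 2, hω3, one_mul]
  have hω6 : ω ^ 6 = 1 := by rw [pow_mul ω 3 2, hω3, one_pow]
  have hcc : c * c ^ 2 = 1 := by rw [← hc]; ring
  refine mem_jointEigenspace.2 ⟨?_, ?_, ?_⟩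
  · fin_cases b <;>
      · change (monomial _ _ + monomial _ _ + monomial _ _).IsHomogeneous 3
        refine IsHomogeneous.add (IsHomogeneous.add ?_ ?_) ?_ <;>
          exact isHomogeneous_monomial_exponent rfl _
  · fin_cases b <;>
      · simp [orbitVector, F1_monomial, smul_monomial, hcc, ← pow_two]
        abel
  · fin_cases b <;>
      simp [orbitVector, F2_monomial, smul_monomial, hω3, hω4, hω5, hω6]

theorem coeff_leadExponent_orbitVector (c : K) (b : Fin 3) :
    coeff (leadExponent b) (orbitVector c b) = 1 := by
  fin_cases b <;> simp [leadExponent, orbitVector, exponent_inj]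

theorem coeff_one_orbitVector (c : K) (b : Fin 3) :
    coeff (exponent 1 1 1) (orbitVector c b) = 0 := by
  fin_cases b <;> simp [orbitVector, exponent_inj]

theorem eq_zero_of_mem_jointEigenspace {ω c : K} (hω1 : ω ≠ 1) (hω3 : ω ^ 3 = 1) (hc : c ≠ 0)
    {b : Fin 3} {f : MvPolynomial (Fin 3) K} (hf : f ∈ jointEigenspace ω c (ω ^ (b : ℕ)))
    (hlead : coeff (leadExponent b) f = 0) (hone : coeff (exponent 1 1 1) f = 0) : f = 0 := by
  obtain ⟨hhom, h1, h2⟩ := mem_jointEigenspace.1 hf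
  have hshift (p q r : ℕ) : coeff (exponent p q r) f = c * coeff (exponent r p q) f := by
    rw [← coeff_F1, h1, coeff_smul, smul_eq_mul]
  have hdiag (p q r : ℕ) :
      ω ^ (q + 2 * r) = ω ^ (b : ℕ) ∨ coeff (exponent p q r) f = 0 := by
    rw [← mul_eq_mul_right_iff, ← coeff_F2, h2, coeff_smul, smul_eq_mul]
  have hprev {p q r : ℕ} (h : coeff (exponent p q r) f = 0) : coeff (exponent r p q) f = 0 :=
    (mul_eq_zero.1 ((hshift p q r).symm.trans h)).resolve_left hc
  have hω0 : ω ≠ 0 := by rintro rfl; simp at hω3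
  have hω2 : ω ^ 2 ≠ 1 := fun h => hω1 (by rw [pow_succ, h, one_mul] at hω3; exact hω3)
  have hω21 : ω ^ 2 ≠ ω := fun h => hω1 (mul_left_cancel₀ hω0 (by rw [← pow_two, h, mul_one]))
  have h300 : coeff (exponent 3 0 0) f = 0 := by
    fin_cases b
    · exact hlead
    · exact (hdiag 3 0 0).resolve_left (by simpa using hω1.symm)
    · exact (hdiag 3 0 0).resolve_left (by simpa using hω2.symm)
  have h210 : coeff (exponent 2 1 0) f = 0 := by
    fin_cases b
    · exact (hdiag 2 1 0).resolve_left (by simpa using hω1)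
    · exact hlead
    · exact (hdiag 2 1 0).resolve_left (by simpa using hω21.symm)
  have h201 : coeff (exponent 2 0 1) f = 0 := by
    fin_cases b
    · exact (hdiag 2 0 1).resolve_left (by simpa using hω2)
    · exact (hdiag 2 0 1).resolve_left (by simpa using hω21)
    · exact hlead
  ext d
  obtain ⟨p, q, r, rfl⟩ := exists_eq_exponent d
  rw [coeff_zero]
  by_cases h : p + q + r = 3
  · have hp : p ≤ 3 := by lia
    have hq : q ≤ 3 := by lia
    obtain rfl : r = 3 - p - q := by lia
    interval_cases p <;> interval_cases q <;> first
      | (exfalso; lia)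
      | assumption
      | exact hprev ‹_›
      | exact hprev (hprev ‹_›)
  · exact coeff_exponent_eq_zero hhom h

theorem coeff_one_eq_zero {ω c s : K} (h : c ≠ 1 ∨ s ≠ 1) (hω3 : ω ^ 3 = 1)
    {f : MvPolynomial (Fin 3) K} (hf : f ∈ jointEigenspace ω c s) :
    coeff (exponent 1 1 1) f = 0 := by
  obtain ⟨-, h1, h2⟩ := mem_jointEigenspace.1 hf
  have e1 : coeff (exponent 1 1 1) f = c * coeff (exponent 1 1 1) f := by
    rw [← smul_eq_mul, ← coeff_smul, ← h1, coeff_F1]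
  have e2 : coeff (exponent 1 1 1) f = s * coeff (exponent 1 1 1) f := by
    rw [← smul_eq_mul, ← coeff_smul, ← h2, coeff_F2, hω3, one_mul]
  rcases h with h | h
  · exact by_contra fun h0 => h ((right_eq_mul₀ h0).1 e1)
  · exact by_contra fun h0 => h ((right_eq_mul₀ h0).1 e2)

theorem monomial_one_mem {ω : K} (hω3 : ω ^ 3 = 1) :
    monomial (exponent 1 1 1) (1 : K) ∈ jointEigenspace ω 1 1 :=
  mem_jointEigenspace.2 ⟨isHomogeneous_monomial_exponent rfl 1, by simp [F1_monomial],
    by simp [F2_monomial, hω3]⟩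

theorem finrank_jointEigenspace_eq_one {ω c : K} (hω1 : ω ≠ 1) (hω3 : ω ^ 3 = 1)
    (hc : c ^ 3 = 1) {b : Fin 3} (h : c ≠ 1 ∨ ω ^ (b : ℕ) ≠ 1) :
    Module.finrank K (jointEigenspace ω c (ω ^ (b : ℕ))) = 1 := by
  have hv := orbitVector_mem hω3 hc b
  have hv0 : orbitVector c b ≠ 0 := fun h0 => by
    simpa [h0] using coeff_leadExponent_orbitVector c b
  have hspan : jointEigenspace ω c (ω ^ (b : ℕ)) = K ∙ orbitVector c b := by
    refine le_antisymm (fun f hf => ?_) ((Submodule.span_singleton_le_iff_mem _ _).2 hv)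
    refine Submodule.mem_span_singleton.2 ⟨coeff (leadExponent b) f, (sub_eq_zero.1 ?_).symm⟩
    refine eq_zero_of_mem_jointEigenspace hω1 hω3 (fun h0 => by simp [h0] at hc)
      (Submodule.sub_mem _ hf (Submodule.smul_mem _ _ hv)) ?_ ?_
    · simp [coeff_leadExponent_orbitVector]
    · simp [coeff_one_orbitVector, coeff_one_eq_zero h hω3 hf]
  rw [hspan, finrank_span_singleton hv0]

theorem finrank_jointEigenspace_one_one {ω : K} (hω1 : ω ≠ 1) (hω3 : ω ^ 3 = 1) :
    Module.finrank K (jointEigenspace ω 1 1) = 2 := by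
  have hv : orbitVector 1 0 ∈ jointEigenspace ω 1 1 := by
    simpa using orbitVector_mem hω3 (one_pow 3) 0
  have hm := monomial_one_mem hω3
  have hlead : coeff (leadExponent 0) (monomial (exponent 1 1 1) (1 : K)) = 0 := by
    simp [leadExponent, exponent_inj]
  have hone : coeff (exponent 1 1 1) (monomial (exponent 1 1 1) (1 : K)) = 1 := by simp
  let e : jointEigenspace ω 1 1 →ₗ[K] K × K :=
    ((lcoeff K (leadExponent 0)).prod (lcoeff K (exponent 1 1 1))) ∘ₗ Submodule.subtype _
  have he : Function.Bijective e := by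
    refine ⟨(injective_iff_map_eq_zero e).2 fun f h => Subtype.ext ?_, fun x => ?_⟩
    · have h' := Prod.ext_iff.1 h
      exact eq_zero_of_mem_jointEigenspace (b := 0) hω1 hω3 one_ne_zero (by simp) h'.1 h'.2
    · refine ⟨⟨x.1 • orbitVector 1 0 + x.2 • monomial (exponent 1 1 1) 1,
        Submodule.add_mem _ (Submodule.smul_mem _ _ hv) (Submodule.smul_mem _ _ hm)⟩, ?_⟩
      refine Prod.ext ?_ ?_
      · change coeff (leadExponent 0) (_ + _) = _
        rw [coeff_add, coeff_smul, coeff_smul, coeff_leadExponent_orbitVector, hlead]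
        simp
      · change coeff (exponent 1 1 1) (_ + _) = _
        rw [coeff_add, coeff_smul, coeff_smul, coeff_one_orbitVector, hone]
        simp
  rw [(LinearEquiv.ofBijective e he).finrank_eq, Module.finrank_prod, Module.finrank_self]

theorem pow_zmod_val_eq_one_iff {ω : K} (hω1 : ω ≠ 1) (hω3 : ω ^ 3 = 1) (a : ZMod 3) :
    ω ^ a.val = 1 ↔ a = 0 := by
  have hord : orderOf ω = 3 := orderOf_eq_prime hω3 hω1
  rw [← orderOf_dvd_iff_pow_eq_one, hord, ← ZMod.natCast_eq_zero_iff, ZMod.natCast_zmod_val]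

end

/-- On the 10-dimensional space `S` of homogeneous polynomials of degree 3 in
`K[X₀,X₁,X₂]`, the substitutions `F₁ : X_i ↦ X_{i+1}` and `F₂ : X_i ↦ ωⁱX_i` commute, and
the resulting `ℤ₃ × ℤ₃`-grading has joint eigenspace of dimension `2` for `(a,b) = (0,0)`
and of dimension `1` for every `(a,b) ≠ (0,0)`. -/
theorem S3V_Z3_Z3_grading (K : Type*) [Field K] [CharZero K]
    (ω : K) (hω1 : ω ≠ 1) (hω3 : ω ^ 3 = 1) :
    (∀ f ∈ MvPolynomial.homogeneousSubmodule (Fin 3) K 3,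
      F1 K (F2 K ω f) = F2 K ω (F1 K f)) ∧
    (∀ a b : ZMod 3,
      Module.finrank K
        ↥(MvPolynomial.homogeneousSubmodule (Fin 3) K 3
          ⊓ Module.End.eigenspace (F1 K).toLinearMap (ω ^ a.val)
          ⊓ Module.End.eigenspace (F2 K ω).toLinearMap (ω ^ b.val))
        = if a = 0 ∧ b = 0 then 2 else 1) := by
  refine ⟨fun f hf => F1_F2_comm hω3 hf, fun a b => ?_⟩
  change Module.finrank K (jointEigenspace ω (ω ^ a.val) (ω ^ b.val)) = _
  split_ifs with h
  · obtain ⟨rfl, rfl⟩ := h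
    rw [ZMod.val_zero, pow_zero]
    exact finrank_jointEigenspace_one_one hω1 hω3
  · refine finrank_jointEigenspace_eq_one (b := b) hω1 hω3 ?_ ?_
    · rw [← pow_mul, mul_comm, pow_mul, hω3, one_pow]
    · rw [Ne, Ne, ← not_and_or, pow_zmod_val_eq_one_iff hω1 hω3]
      exact fun h' => h ⟨h'.1, (pow_zmod_val_eq_one_iff hω1 hω3 b).1 h'.2⟩
end
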